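/- Suppose the link cost function u is continuous, and consider the CumLog dynamics with finite initial valuation s^0 ∈ ℝ^K and strictly positive step sizes satisfying ∑_{t=0}^∞ η^t < ∞. Then the valuation sequence s^t converges to a finite limit s̄ ∈ ℝ^K, the strategy sequence p^t converges to q_r(s̄), and every component of the limiting strategy q_r(s̄) is strictly positive (i.e., every route is selected with positive probability in the limit). -/

import Mathlib

open Finset Filter Topology

/-! The route costs are bounded on the compact set of strategies, so the increments `η t • c (p t)`
are absolutely summable and the valuations form a Cauchy sequence. Strategies converge because the
logit map is continuous, and a finite valuation gives every route a positive weight. -/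

open Bornology Matrix

theorem cauchySeq_of_add_smul_of_summable {𝕜 V : Type*} [NormedField 𝕜]
    [SeminormedAddCommGroup V] [NormedSpace 𝕜 V] {η : ℕ → 𝕜} {x v : ℕ → V}
    (hη : Summable fun t ↦ ‖η t‖) (hv : IsBounded (Set.range v))
    (hx : ∀ t, x (t + 1) = x t + η t • v t) : CauchySeq x := by
  obtain ⟨M, hM⟩ := hv.exists_norm_le
  refine cauchySeq_of_dist_le_of_summable (fun t ↦ ‖η t‖ * M) (fun t ↦ ?_) (hη.mul_right M)
  calc dist (x t) (x (t + 1)) = ‖η t‖ * ‖v t‖ := by rw [hx, dist_self_add_right, norm_smul]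
    _ ≤ ‖η t‖ * M := by gcongr; exact hM _ (Set.mem_range_self t)

section Logit

variable {W K : Type*} [Fintype K] [DecidableEq W] (ω : K → W)

/-- The mixed strategies of the routing game: for each OD pair, a probability distribution over its
routes. The normalization is indexed by routes `k`, through the OD pair `ω k`, so that it does not
exclude every strategy when some OD pair has no route. -/
def strategySet : Set (K → ℝ) :=
  {p | (∀ k, 0 ≤ p k) ∧ ∀ k, ∑ k' with ω k' = ω k, p k' = 1}

/-- The logit choice `q_r(s)`: the strategy that, within each OD pair, selects route `k` with
probability proportional to `exp (-r * s k)`. -/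
noncomputable def logitChoice (r : ℝ) (s : K → ℝ) (k : K) : ℝ :=
  Real.exp (-r * s k) / ∑ k' with ω k' = ω k, Real.exp (-r * s k')

theorem strategySet_subset_Icc : strategySet ω ⊆ Set.Icc 0 1 := fun p hp ↦
  ⟨hp.1, fun k ↦ (single_le_sum (fun k' _ ↦ hp.1 k') (by simp)).trans_eq (hp.2 k)⟩

theorem isBounded_image_strategySet {V : Type*} [PseudoMetricSpace V] {c : (K → ℝ) → V}
    (hc : Continuous c) : IsBounded (c '' strategySet ω) :=
  (isCompact_Icc.image hc).isBounded.subset (Set.image_mono (strategySet_subset_Icc ω))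

theorem sum_fiber_exp_pos (f : K → ℝ) (k : K) : 0 < ∑ k' with ω k' = ω k, Real.exp (f k') :=
  sum_pos (fun _ _ ↦ Real.exp_pos _) ⟨k, by simp⟩

theorem logitChoice_pos (r : ℝ) (s : K → ℝ) (k : K) : 0 < logitChoice ω r s k :=
  div_pos (Real.exp_pos _) (sum_fiber_exp_pos ω _ k)

theorem logitChoice_mem_strategySet (r : ℝ) (s : K → ℝ) :
    logitChoice ω r s ∈ strategySet ω := by
  refine ⟨fun k ↦ (logitChoice_pos ω r s k).le, fun k ↦ ?_⟩
  calc ∑ k' with ω k' = ω k, logitChoice ω r s k'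
      = ∑ k' with ω k' = ω k,
          Real.exp (-r * s k') / ∑ j with ω j = ω k, Real.exp (-r * s j) :=
        sum_congr rfl fun k' hk' ↦ by rw [logitChoice, (mem_filter.mp hk').2]
    _ = 1 := by rw [← sum_div, div_self (sum_fiber_exp_pos ω _ k).ne']

theorem continuous_logitChoice (r : ℝ) : Continuous (logitChoice ω r) :=
  continuous_pi fun k ↦
    Continuous.div (by fun_prop) (by fun_prop) fun _ ↦ (sum_fiber_exp_pos ω _ k).ne'

end Logit

/-- The route cost function `p ↦ Λᵀ u(Λ̄ p)`. The matrix `Λbar` from strategies to link flows is a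
separate argument, not tied here to the incidence matrix `Λ` and the demands. -/
def routeCost {E K : Type*} [Fintype E] [Fintype K] (Λ Λbar : Matrix E K ℝ)
    (u : (E → ℝ) → E → ℝ) (p : K → ℝ) : K → ℝ :=
  Λᵀ *ᵥ u (Λbar *ᵥ p)

theorem continuous_routeCost {E K : Type*} [Fintype E] [Fintype K] (Λ Λbar : Matrix E K ℝ)
    {u : (E → ℝ) → E → ℝ} (hu : Continuous u) : Continuous (routeCost Λ Λbar u) :=
  continuous_const.matrix_mulVec (hu.comp (continuous_const.matrix_mulVec continuous_id))

theorem stmt_15_general {W K : Type*} [Fintype K] [DecidableEq W] (ω : K → W)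
    {c : (K → ℝ) → K → ℝ} (hc : IsBounded (c '' strategySet ω)) (r : ℝ)
    {η : ℕ → ℝ} (hη : Summable η) {s p : ℕ → K → ℝ}
    (hp : ∀ t, p t = logitChoice ω r (s t)) (hs : ∀ t, s (t + 1) = s t + η t • c (p t)) :
    ∃ sbar : K → ℝ, Tendsto s atTop (𝓝 sbar) ∧
      Tendsto p atTop (𝓝 (logitChoice ω r sbar)) ∧ ∀ k, 0 < logitChoice ω r sbar k := by
  have hcost : IsBounded (Set.range fun t ↦ c (p t)) := hc.subset <|
    Set.range_subset_iff.2 fun t ↦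
      Set.mem_image_of_mem c (hp t ▸ logitChoice_mem_strategySet ω r (s t))
  obtain ⟨sbar, hsbar⟩ :=
    cauchySeq_tendsto_of_complete (cauchySeq_of_add_smul_of_summable hη.norm hcost hs)
  refine ⟨sbar, hsbar, ?_, logitChoice_pos ω r sbar⟩
  rw [funext hp]
  exact ((continuous_logitChoice ω r).tendsto sbar).comp hsbar

theorem stmt_15
    {W K E : Type*} [Fintype W] [Fintype K] [Fintype E]
    [DecidableEq W] [DecidableEq E]
    [Nonempty W] [Nonempty K]
    (ω : K → W) (hω : Function.Surjective ω)
    (Λ : E → K → ℝ) (hΛ : ∀ e k, Λ e k = 0 ∨ Λ e k = 1)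
    (d : W → ℝ) (hd : ∀ w, 0 < d w)
    (u : (E → ℝ) → (E → ℝ))
    (P : Set (K → ℝ))
    (hP : P = {p : K → ℝ | (∀ k, 0 ≤ p k) ∧
      ∀ w, ∑ k ∈ Finset.univ.filter (fun k => ω k = w), p k = 1})
    (Λbar : E → K → ℝ) (hΛbar : ∀ e k, Λbar e k = d (ω k) * Λ e k)
    (c : (K → ℝ) → K → ℝ)
    (hc : ∀ p k, c p k = ∑ e, Λ e k * u (fun e' => ∑ k', Λbar e' k' * p k') e)
    (q : ℝ → (K → ℝ) → K → ℝ)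
    (hq : ∀ (rr : ℝ) (ss : K → ℝ) (k : K),
      q rr ss k = Real.exp (-rr * ss k) /
        ∑ k' ∈ Finset.univ.filter (fun k' => ω k' = ω k), Real.exp (-rr * ss k'))
    (r : ℝ) (hr : 0 < r)
    (η : ℕ → ℝ) (hη : ∀ t, 0 < η t)
    (s : ℕ → K → ℝ) (p : ℕ → K → ℝ)
    (hp : ∀ t, p t = q r (s t))
    (hs : ∀ t, s (t + 1) = fun k => s t k + η t * c (p t) k)
    (hu : Continuous u) (hηsum : Summable η) :
    ∃ sbar : K → ℝ, Tendsto s atTop (nhds sbar) ∧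
      Tendsto p atTop (nhds (q r sbar)) ∧ ∀ k, 0 < q r sbar k := by
  obtain rfl : q = logitChoice ω := by ext; exact hq _ _ _
  obtain rfl : c = routeCost Λ Λbar u := by ext; exact hc _ _
  exact stmt_15_general ω
    (isBounded_image_strategySet ω (continuous_routeCost Λ Λbar hu)) r hηsum hp hs
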